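/- arXiv:2503.06461 — 4 statements merged into one kernel-verified Lean document; each statement's English description precedes it below -/
import Mathlib

section
/- Let n ≥ 1 be a natural number and η > 0, 0 < ε < η, r ≥ 1 real numbers, and set s = √n·(η−ε). The function g : ℝ → ℝ defined by g(b) = (r/(r+1))·Φ(−s − b) + (1/(r+1))·Φ(−s + b) attains its global minimum at b* = (ln r)/(2s) = (ln r)/(2√n(η−ε)); that is, for every b ∈ ℝ, g(b) ≥ g(b*), with strict inequality whenever b ≠ b*. (Determination of the optimal bias b*_rob of the robust classifier in the proof of Theorem 1.) -/
open MeasureTheory ProbabilityTheory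

/-- The standard normal CDF, real-valued. -/
noncomputable def stdNormalCDF (t : ℝ) : ℝ := (gaussianReal 0 1 (Set.Iic t)).toReal

/-- The overall (robust) error of the uniform-weight linear classifier with bias `b`. -/
noncomputable def mixtureError (r s b : ℝ) : ℝ :=
  (r / (r + 1)) * stdNormalCDF (-s - b) + (1 / (r + 1)) * stdNormalCDF (-s + b)

lemma stdNormalCDF_hasDerivAt (t : ℝ) :
    HasDerivAt stdNormalCDF (gaussianPDFReal 0 1 t) t := by
  have hint : Integrable (gaussianPDFReal 0 1) := integrable_gaussianPDFReal 0 1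
  have hcont : Continuous (gaussianPDFReal 0 1) := by
    unfold gaussianPDFReal
    fun_prop
  have heq : stdNormalCDF = fun u => (∫ x in Set.Iic (0 : ℝ), gaussianPDFReal 0 1 x)
      + ∫ x in (0 : ℝ)..u, gaussianPDFReal 0 1 x := by
    funext u
    unfold stdNormalCDF
    rw [gaussianReal_apply_eq_integral 0 one_ne_zero, ENNReal.toReal_ofReal
      (integral_nonneg fun x => gaussianPDFReal_nonneg 0 1 x),
      ← intervalIntegral.integral_Iic_sub_Iic hint.integrableOn hint.integrableOn]
    ring
  rw [heq]
  exact (intervalIntegral.integral_hasDerivAt_right (hcont.intervalIntegrable _ _)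
    (hcont.stronglyMeasurableAtFilter _ _) hcont.continuousAt).const_add _

lemma mixtureError_hasDerivAt (r s b : ℝ) :
    HasDerivAt (mixtureError r s)
      ((1 / (r + 1)) * gaussianPDFReal 0 1 (-s - b) * (Real.exp (2 * s * b) - r)) b := by
  have h1 := (stdNormalCDF_hasDerivAt (-s - b)).comp b ((hasDerivAt_id b).const_sub (-s))
  have h2 := (stdNormalCDF_hasDerivAt (-s + b)).comp b ((hasDerivAt_id b).const_add (-s))
  have h := (h1.const_mul (r / (r + 1))).add (h2.const_mul (1 / (r + 1)))
  have key : gaussianPDFReal 0 1 (-s + b)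
      = gaussianPDFReal 0 1 (-s - b) * Real.exp (2 * s * b) * 1 := by
    unfold gaussianPDFReal
    rw [mul_one, mul_assoc (_)⁻¹, ← Real.exp_add]
    congr 2
    simp only [NNReal.coe_one]
    ring
  have e : (1 / (r + 1)) * gaussianPDFReal 0 1 (-s - b) * (Real.exp (2 * s * b) - r)
      = r / (r + 1) * (gaussianPDFReal 0 1 (-s - b) * -1)
        + 1 / (r + 1) * (gaussianPDFReal 0 1 (-s + b) * 1) := by
    rw [key]
    ring
  rw [e]
  exact h

lemma mixtureError_strict (r s : ℝ) (hr : 1 ≤ r) (hs : 0 < s) (b : ℝ)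
    (hb : b ≠ Real.log r / (2 * s)) :
    mixtureError r s (Real.log r / (2 * s)) < mixtureError r s b := by
  have hr0 : 0 < r := by linarith
  have hc : Continuous (mixtureError r s) :=
    continuous_iff_continuousAt.2 fun x => (mixtureError_hasDerivAt r s x).continuousAt
  have hpos : ∀ x, 0 < (1 / (r + 1)) * gaussianPDFReal 0 1 (-s - x) := fun x =>
    mul_pos (by positivity) (gaussianPDFReal_pos 0 1 _ one_ne_zero)
  rcases lt_or_gt_of_ne hb with h | h
  · have hanti : StrictAntiOn (mixtureError r s) (Set.Iic (Real.log r / (2 * s))) := by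
      apply strictAntiOn_of_deriv_neg (convex_Iic _) hc.continuousOn
      intro x hx
      rw [interior_Iic, Set.mem_Iio, lt_div_iff₀ (by positivity)] at hx
      rw [(mixtureError_hasDerivAt r s x).deriv]
      apply mul_neg_of_pos_of_neg (hpos x)
      have := (Real.lt_log_iff_exp_lt hr0).1 (show 2 * s * x < Real.log r by linarith)
      linarith
    exact hanti h.le (Set.mem_Iic.2 le_rfl) h
  · have hmono : StrictMonoOn (mixtureError r s) (Set.Ici (Real.log r / (2 * s))) := by
      apply strictMonoOn_of_deriv_pos (convex_Ici _) hc.continuousOn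
      intro x hx
      rw [interior_Ici, Set.mem_Ioi, div_lt_iff₀ (by positivity)] at hx
      rw [(mixtureError_hasDerivAt r s x).deriv]
      apply mul_pos (hpos x)
      have := (Real.log_lt_iff_lt_exp hr0).1 (show Real.log r < 2 * s * x by linarith)
      linarith
    exact hmono (Set.mem_Ici.2 le_rfl) h.le h

/-- The optimal robust bias: `b* = (ln r)/(2s)` with `s = √n·(η−ε)` is the global minimizer
of the overall robust error, strictly so away from `b*`. -/
theorem optimal_bias_robust (n : ℕ) (hn : 1 ≤ n) (η ε r : ℝ) (hη : 0 < η)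
    (hε : 0 < ε) (hεη : ε < η) (hr : 1 ≤ r) (b : ℝ) :
    mixtureError r (Real.sqrt n * (η - ε)) b ≥
      mixtureError r (Real.sqrt n * (η - ε)) (Real.log r / (2 * (Real.sqrt n * (η - ε)))) ∧
    (b ≠ Real.log r / (2 * (Real.sqrt n * (η - ε))) →
      mixtureError r (Real.sqrt n * (η - ε)) b >
        mixtureError r (Real.sqrt n * (η - ε)) (Real.log r / (2 * (Real.sqrt n * (η - ε))))) := by
  have hs : 0 < Real.sqrt n * (η - ε) :=
    mul_pos (Real.sqrt_pos.2 (by exact_mod_cast hn)) (by linarith)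
  have key := mixtureError_strict r _ hr hs b
  refine ⟨?_, key⟩
  by_cases hb : b = Real.log r / (2 * (Real.sqrt n * (η - ε)))
  · rw [← hb]
  · exact (key hb).le
end

section
/- Let n ≥ 1 be a natural number, η ∈ ℝ, r ≥ 1 and b ∈ ℝ, and let w ∈ ℝ^n with w ≠ 0. Let μ₊ (resp. μ₋) be the n-fold product on ℝ^n of the real Gaussian measure with mean +η (resp. −η) and variance 1. Then the overall standard error of the linear classifier f_{w,b}, namely (r/(r+1))·μ₊({x : ∑_k w_k x_k + b < 0}) + (1/(r+1))·μ₋({x : ∑_k w_k x_k + b > 0}), equals (r/(r+1))·Φ((−η·∑_k w_k − b)/‖w‖₂) + (1/(r+1))·Φ((−η·∑_k w_k + b)/‖w‖₂), where ‖w‖₂ = √(∑_k w_k²). (Closed-form overall standard error of an arbitrary linear classifier on the Gaussian mixture, the key identity behind Lemma 1.) -/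
open MeasureTheory ProbabilityTheory

lemma map_weighted_sum (n : ℕ) (η : ℝ) (w : Fin n → ℝ) (s : Finset (Fin n)) :
    (Measure.pi fun _ : Fin n => gaussianReal η 1).map (∑ k ∈ s, fun x => w k * x k)
      = gaussianReal (η * ∑ k ∈ s, w k) (Real.toNNReal (∑ k ∈ s, (w k) ^ 2)) := by
  classical
  have hind : iIndepFun (fun (k : Fin n) (x : Fin n → ℝ) => w k * x k)
      (Measure.pi fun _ : Fin n => gaussianReal η 1) :=
    iIndepFun_pi (X := fun (k : Fin n) (y : ℝ) => w k * y)
      (fun k => (measurable_const_mul (w k)).aemeasurable)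
  have hm : ∀ k : Fin n, Measurable (fun x : Fin n → ℝ => w k * x k) := fun k => by
    fun_prop
  have hk : ∀ k : Fin n, (Measure.pi fun _ : Fin n => gaussianReal η 1).map
      (fun x => w k * x k) = gaussianReal (w k * η) (Real.toNNReal ((w k) ^ 2)) := by
    intro k
    have h1 : (Measure.pi fun _ : Fin n => gaussianReal η 1).map (fun x => x k)
        = gaussianReal η 1 :=
      (measurePreserving_eval (fun _ : Fin n => gaussianReal η 1) k).map_eq
    have h2 := Measure.map_map (μ := Measure.pi fun _ : Fin n => gaussianReal η 1)
      (measurable_const_mul (w k)) (measurable_pi_apply k)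
    rw [h1, gaussianReal_map_const_mul] at h2
    refine h2.symm.trans ?_
    congr 1
    ext
    simp [Real.coe_toNNReal _ (sq_nonneg (w k))]
  induction s using Finset.induction_on with
  | empty =>
    simp only [Finset.sum_empty, mul_zero, Real.toNNReal_zero, gaussianReal_zero_var]
    have : (0 : (Fin n → ℝ) → ℝ) = fun _ => 0 := rfl
    rw [this, Measure.map_const]
    simp
  | insert a s ha ih =>
    rw [Finset.sum_insert ha, Finset.sum_insert ha, Finset.sum_insert ha, add_comm]
    rw [gaussianReal_add_gaussianReal_of_indepFun
      (hind.indepFun_finsetSum_of_notMem hm ha) ih (hk a)]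
    rw [Real.toNNReal_add (sq_nonneg _) (Finset.sum_nonneg fun _ _ => sq_nonneg _)]
    congr 1
    · ring
    · exact add_comm _ _

lemma measure_halfspace (n : ℕ) (η b : ℝ) (w : Fin n → ℝ) (hw : w ≠ 0) :
    ((Measure.pi fun _ : Fin n => gaussianReal η 1)
          {x : Fin n → ℝ | (∑ k, w k * x k) + b < 0}).toReal
      = stdNormalCDF ((-η * ∑ k, w k - b) / Real.sqrt (∑ k, (w k) ^ 2)) := by
  have hpos : 0 < ∑ k, (w k) ^ 2 := by
    obtain ⟨k, hk⟩ := Function.ne_iff.mp hw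
    exact Finset.sum_pos' (fun _ _ => sq_nonneg _) ⟨k, Finset.mem_univ _, by simpa using sq_pos_iff.mpr hk⟩
  set s := Real.sqrt (∑ k, (w k) ^ 2) with hs
  have hs0 : 0 < s := Real.sqrt_pos.mpr hpos
  have hsum := map_weighted_sum n η w Finset.univ
  have hm : Measurable (∑ k, fun x : Fin n → ℝ => w k * x k) := by
    have h0 : (∑ k, fun x : Fin n → ℝ => w k * x k) = fun x => ∑ k, w k * x k := by
      ext x
      simp
    rw [h0]
    fun_prop
  have hstd : (gaussianReal 0 1).map (fun z => s * z + η * ∑ k, w k)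
      = gaussianReal (η * ∑ k, w k) (Real.toNNReal (∑ k, (w k) ^ 2)) := by
    have h2 := Measure.map_map (μ := gaussianReal 0 1)
      (measurable_add_const (η * ∑ k, w k)) (measurable_const_mul s)
    rw [gaussianReal_map_const_mul, gaussianReal_map_add_const] at h2
    refine h2.symm.trans ?_
    congr 1
    · ring
    · ext
      simp [hs, Real.sq_sqrt hpos.le, hpos.le]
  have h1 : {x : Fin n → ℝ | (∑ k, w k * x k) + b < 0}
      = (∑ k, fun x : Fin n → ℝ => w k * x k) ⁻¹' (Set.Iio (-b)) := by
    ext x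
    simp only [Set.mem_setOf_eq, Set.mem_preimage, Finset.sum_apply, Set.mem_Iio]
    constructor <;> intro h <;> linarith
  have h3 : (fun z => s * z + η * ∑ k, w k) ⁻¹' (Set.Iio (-b))
      = Set.Iio ((-η * ∑ k, w k - b) / s) := by
    ext z
    simp only [Set.mem_preimage, Set.mem_Iio, lt_div_iff₀ hs0]
    constructor <;> intro h <;> linarith
  have := nullSingletonClass_gaussianReal (μ := 0) (v := 1) one_ne_zero
  rw [h1, ← Measure.map_apply hm measurableSet_Iio, hsum, ← hstd,
    Measure.map_apply (by fun_prop) measurableSet_Iio, h3, stdNormalCDF,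
    measure_congr Iio_ae_eq_Iic]

/-- Closed-form overall standard error of an arbitrary linear classifier on the Gaussian
mixture (key identity behind Lemma 1). -/
theorem overall_standard_error_closed_form (n : ℕ) (hn : 1 ≤ n) (η r b : ℝ) (hr : 1 ≤ r)
    (w : Fin n → ℝ) (hw : w ≠ 0) :
    (r / (r + 1)) *
        ((Measure.pi fun _ : Fin n => gaussianReal η 1)
          {x : Fin n → ℝ | (∑ k, w k * x k) + b < 0}).toReal +
      (1 / (r + 1)) *
        ((Measure.pi fun _ : Fin n => gaussianReal (-η) 1)
          {x : Fin n → ℝ | (∑ k, w k * x k) + b > 0}).toReal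
      = (r / (r + 1)) *
          stdNormalCDF ((-η * ∑ k, w k - b) / Real.sqrt (∑ k, (w k) ^ 2)) +
        (1 / (r + 1)) *
          stdNormalCDF ((-η * ∑ k, w k + b) / Real.sqrt (∑ k, (w k) ^ 2)) := by
  have h1 := measure_halfspace n η b w hw
  have h2 := measure_halfspace n (-η) (-b) (-w) (neg_ne_zero.mpr hw)
  have hset : {x : Fin n → ℝ | (∑ k, w k * x k) + b > 0}
      = {x : Fin n → ℝ | (∑ k, (-w) k * x k) + -b < 0} := by
    ext x
    simp only [Set.mem_setOf_eq, Pi.neg_apply, neg_mul, Finset.sum_neg_distrib]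
    constructor <;> intro h <;> linarith
  rw [h1, hset, h2]
  simp only [Pi.neg_apply, Finset.sum_neg_distrib, neg_sq, neg_neg, mul_neg, neg_mul,
    sub_neg_eq_add]
end

section
/- Let n ≥ 1 be a natural number, η > 0, r ≥ 1 and b ∈ ℝ, and let w ∈ ℝ^n with ∑_{k=1}^n w_k² = 1. Then r·Φ(−η·∑_{k=1}^n w_k − b) + Φ(−η·∑_{k=1}^n w_k + b) ≥ r·Φ(−√n·η − b) + Φ(−√n·η + b). (Lemma 1: among unit-norm weight vectors, the uniform weight vector w = (1/√n, …, 1/√n) minimizes the overall standard error of the linear classifier on the Gaussian mixture, i.e. the optimal natural classifier has equal weights w₁ = w₂ = ⋯ = w_n.) -/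
open MeasureTheory ProbabilityTheory

/-- Lemma 1: among unit-norm weight vectors, the uniform weight vector minimizes the
overall standard error of the linear classifier on the Gaussian mixture. -/
theorem uniform_weights_minimize_standard_error (n : ℕ) (hn : 1 ≤ n) (η r b : ℝ)
    (hη : 0 < η) (hr : 1 ≤ r) (w : Fin n → ℝ) (hw : ∑ k, (w k) ^ 2 = 1) :
    r * stdNormalCDF (-η * ∑ k, w k - b) + stdNormalCDF (-η * ∑ k, w k + b) ≥
      r * stdNormalCDF (-Real.sqrt n * η - b) + stdNormalCDF (-Real.sqrt n * η + b) := by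
  have hmono : ∀ x y : ℝ, x ≤ y → stdNormalCDF x ≤ stdNormalCDF y := by
    intro x y hxy
    unfold stdNormalCDF
    exact ENNReal.toReal_mono (measure_ne_top _ _) (measure_mono (Set.Iic_subset_Iic.mpr hxy))
  have hcs : (∑ k, w k) ≤ Real.sqrt n := by
    apply Real.le_sqrt_of_sq_le
    have h := sq_sum_le_card_mul_sum_sq (s := Finset.univ) (f := w)
    rw [hw] at h
    simpa using h
  have h1 : η * ∑ k, w k ≤ η * Real.sqrt n := mul_le_mul_of_nonneg_left hcs hη.le
  have h2 := hmono (-Real.sqrt n * η - b) (-η * ∑ k, w k - b) (by linarith)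
  have h3 := hmono (-Real.sqrt n * η + b) (-η * ∑ k, w k + b) (by linarith)
  have h4 := mul_le_mul_of_nonneg_left h2 (by linarith : (0 : ℝ) ≤ r)
  linarith
end

section
/- Let n ≥ 1 be a natural number, η > 0, 0 < ε < η, r ≥ 1 and b ∈ ℝ, and let w ∈ ℝ^n with ∑_{k=1}^n w_k² = 1. Set t(w) = η·∑_{k=1}^n w_k − ε·∑_{k=1}^n |w_k|. Then r·Φ(−t(w) − b) + Φ(−t(w) + b) ≥ r·Φ(−√n·(η−ε) − b) + Φ(−√n·(η−ε) + b). (Lemma 2: among unit-norm weight vectors, the uniform weight vector w = (1/√n, …, 1/√n) minimizes the overall robust error under ℓ∞ perturbations of size ε, i.e. the optimal robust classifier has equal weights w₁ = w₂ = ⋯ = w_n.) -/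
open MeasureTheory ProbabilityTheory

/-- Lemma 2: among unit-norm weight vectors, the uniform weight vector minimizes the
overall robust error of the linear classifier under `ℓ∞` perturbations of size `ε`. -/
theorem uniform_weights_minimize_robust_error (n : ℕ) (hn : 1 ≤ n) (η ε r b : ℝ)
    (hη : 0 < η) (hε : 0 < ε) (hεη : ε < η) (hr : 1 ≤ r)
    (w : Fin n → ℝ) (hw : ∑ k, (w k) ^ 2 = 1) :
    r * stdNormalCDF (-(η * ∑ k, w k - ε * ∑ k, |w k|) - b) +
        stdNormalCDF (-(η * ∑ k, w k - ε * ∑ k, |w k|) + b) ≥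
      r * stdNormalCDF (-Real.sqrt n * (η - ε) - b) +
        stdNormalCDF (-Real.sqrt n * (η - ε) + b) := by
  have hmono : Monotone stdNormalCDF := fun x y hxy =>
    ENNReal.toReal_mono (measure_ne_top _ _) (measure_mono (Set.Iic_subset_Iic.2 hxy))
  have h1 : ∑ k, w k ≤ ∑ k, |w k| := Finset.sum_le_sum fun k _ => le_abs_self _
  have h2 : ∑ k, |w k| ≤ Real.sqrt n := by
    apply Real.le_sqrt_of_sq_le
    have h := sq_sum_le_card_mul_sum_sq (s := Finset.univ) (f := fun k => |w k|)
    simpa [sq_abs, hw] using h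
  have ht : -Real.sqrt n * (η - ε) ≤ -(η * ∑ k, w k - ε * ∑ k, |w k|) := by
    nlinarith [mul_le_mul_of_nonneg_left h1 hη.le,
      mul_le_mul_of_nonneg_left h2 (sub_pos.2 hεη).le]
  have ha := hmono (sub_le_sub_right ht b)
  have hb' := hmono (add_le_add ht (le_refl b))
  exact add_le_add (mul_le_mul_of_nonneg_left ha (by linarith)) hb'
end
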